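/- Let |M| = |W| = 3. No mechanism is interim stable: for every mechanism φ there exist a prior ψ over preference profiles and a coalition A' ⊆ M ∪ W that blocks φ in the interim at ψ. -/

import Mathlib

open scoped ENNReal

namespace Unraveling

variable (M W : Type*) [Fintype M] [DecidableEq M] [Fintype W] [DecidableEq W]

/-- A matching between men `M` and women `W`.  `Sum.inl m` denotes man `m`,
`Sum.inr w` denotes woman `w`; `toFun a = a` means agent `a` is unmatched. -/
structure Matching where
  toFun : M ⊕ W → M ⊕ W
  man_range : ∀ m : M, toFun (Sum.inl m) = Sum.inl m ∨ ∃ w : W, toFun (Sum.inl m) = Sum.inr w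
  woman_range : ∀ w : W, toFun (Sum.inr w) = Sum.inr w ∨ ∃ m : M, toFun (Sum.inr w) = Sum.inl m
  mutual_cond : ∀ (m : M) (w : W), toFun (Sum.inl m) = Sum.inr w ↔ toFun (Sum.inr w) = Sum.inl m

/-- A preference profile: each man has a ranking (a bijection onto `{1,…,|W|+1}`,
encoded as an `Equiv` onto `Fin (|W|+1)`) of the women together with the option
(`none`) of remaining unmatched, and symmetrically for women. -/
structure Profile where
  mpref : M → (Option W ≃ Fin (Fintype.card W + 1))
  wpref : W → (Option M ≃ Fin (Fintype.card M + 1))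

variable {M W}

/-- The partner of man `m` under matching `μ` (`none` if unmatched). -/
def Matching.partnerM (μ : Matching M W) (m : M) : Option W :=
  match μ.toFun (Sum.inl m) with
  | Sum.inl _ => none
  | Sum.inr w => some w

/-- The partner of woman `w` under matching `μ` (`none` if unmatched). -/
def Matching.partnerW (μ : Matching M W) (w : W) : Option M :=
  match μ.toFun (Sum.inr w) with
  | Sum.inr _ => none
  | Sum.inl m => some m

/-- The rank (`1` = most preferred) that man `m` assigns to `o` under profile `P`. -/
def mrank (P : Profile M W) (m : M) (o : Option W) : ℕ := (P.mpref m o : ℕ) + 1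

/-- The rank (`1` = most preferred) that woman `w` assigns to `o` under profile `P`. -/
def wrank (P : Profile M W) (w : W) (o : Option M) : ℕ := (P.wpref w o : ℕ) + 1

/-- The rank that agent `a` assigns to his/her partner under matching `μ`. -/
def prank (P : Profile M W) (μ : Matching M W) : M ⊕ W → ℕ
  | Sum.inl m => mrank P m (μ.partnerM m)
  | Sum.inr w => wrank P w (μ.partnerW w)

/-- The rank that agent `a` assigns to remaining unmatched. -/
def urank (P : Profile M W) : M ⊕ W → ℕ
  | Sum.inl m => mrank P m none
  | Sum.inr w => wrank P w none

/-- Stability of a matching at a profile. -/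
def IsStable (P : Profile M W) (μ : Matching M W) : Prop :=
  (∀ a : M ⊕ W, prank P μ a ≤ urank P a) ∧
  (∀ (m : M) (w : W), mrank P m (some w) < prank P μ (Sum.inl m) →
     prank P μ (Sum.inr w) < wrank P w (some m))

/-- A mechanism maps each preference profile to a probability distribution over matchings. -/
abbrev Mechanism (M W : Type*) [Fintype M] [DecidableEq M] [Fintype W] [DecidableEq W] :=
  Profile M W → PMF (Matching M W)

/-- The probability that `p` assigns to the set `s`. -/
noncomputable def prob {α : Type*} (p : PMF α) (s : Set α) : ℝ≥0∞ :=
  ∑' x, s.indicator (fun y => p y) x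

/-- CDF of the rank that agent `a` assigns to his/her random partner, when the
matching is drawn from `p` and the profile is `P`. -/
noncomputable def cdfAt (P : Profile M W) (p : PMF (Matching M W)) (a : M ⊕ W) (n : ℕ) : ℝ≥0∞ :=
  prob p {μ | prank P μ a ≤ n}

/-- `SD F G` : the rank distribution with CDF `F` strictly first-order
stochastically dominates the one with CDF `G`. -/
def SD (F G : ℕ → ℝ≥0∞) : Prop := (∀ n, G n ≤ F n) ∧ ∃ n, G n < F n

/-- A coalition consisting of at most one man and at most one woman. -/
def IsPairCoalition (A' : Set (M ⊕ W)) : Prop :=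
  {m : M | Sum.inl m ∈ A'}.Subsingleton ∧ {w : W | Sum.inr w ∈ A'}.Subsingleton

/-- Coalition `A'` blocks mechanism `φ` ex-post at profile `P`. -/
def BlocksExPost (A' : Set (M ⊕ W)) (φ : Mechanism M W) (P : Profile M W) : Prop :=
  A'.Nonempty ∧ ∃ φ' : Mechanism M W,
    (∀ a ∈ A', prob (φ' P) {μ | μ.toFun a ∈ A'} = 1) ∧
    (∀ a ∈ A', SD (cdfAt P (φ' P) a) (cdfAt P (φ P) a))

def ExPostStable (φ : Mechanism M W) : Prop :=
  ∀ (P : Profile M W) (A' : Set (M ⊕ W)), ¬ BlocksExPost A' φ P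

def ExPostPairwiseStable (φ : Mechanism M W) : Prop :=
  ∀ (P : Profile M W) (A' : Set (M ⊕ W)), IsPairCoalition A' → ¬ BlocksExPost A' φ P

/-- Ex-ante CDF of the rank of agent `a`'s partner under mechanism `φ`, when
the profile is drawn from prior `ψ`. -/
noncomputable def cdfExAnte (ψ : PMF (Profile M W)) (φ : Mechanism M W) (a : M ⊕ W) (n : ℕ) : ℝ≥0∞ :=
  ∑' P, ψ P * cdfAt P (φ P) a n

/-- Coalition `A'` blocks mechanism `φ` ex-ante at prior `ψ`. -/
def BlocksExAnte (A' : Set (M ⊕ W)) (φ : Mechanism M W) (ψ : PMF (Profile M W)) : Prop :=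
  A'.Nonempty ∧ ∃ φ' : Mechanism M W,
    (∀ a ∈ A', (∑' P, ψ P * prob (φ' P) {μ | μ.toFun a ∈ A'}) = 1) ∧
    (∀ a ∈ A', SD (cdfExAnte ψ φ' a) (cdfExAnte ψ φ a))

def ExAnteStableAt (φ : Mechanism M W) (ψ : PMF (Profile M W)) : Prop :=
  ∀ A' : Set (M ⊕ W), ¬ BlocksExAnte A' φ ψ

def ExAnteStable (φ : Mechanism M W) : Prop := ∀ ψ, ExAnteStableAt φ ψ

def ExAntePairwiseStable (φ : Mechanism M W) : Prop :=
  ∀ (ψ : PMF (Profile M W)) (A' : Set (M ⊕ W)), IsPairCoalition A' → ¬ BlocksExAnte A' φ ψ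

/-- `prefEq P P' a` : profiles `P` and `P'` give agent `a` the same preferences. -/
def prefEq (P P' : Profile M W) : M ⊕ W → Prop
  | Sum.inl m => P.mpref m = P'.mpref m
  | Sum.inr w => P.wpref w = P'.wpref w

/-- The event `Y_a(P̃_a)`: profiles in which `a`'s preferences agree with `Pt`
and every other member of the coalition `A'` has preferences in his/her
acceptance set `R`. -/
def interimEvent (A' : Set (M ⊕ W)) (R : (M ⊕ W) → Set (Profile M W)) (a : M ⊕ W)
    (Pt : Profile M W) : Set (Profile M W) :=
  {P | prefEq P Pt a ∧ ∀ a' ∈ A', a' ≠ a → P ∈ R a'}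

/-- CDF of the rank of `a`'s partner under `φ`, with the profile drawn from `ψ`
conditioned on the event `Y`. -/
noncomputable def cdfCond (ψ : PMF (Profile M W)) (Y : Set (Profile M W)) (φ : Mechanism M W)
    (a : M ⊕ W) (n : ℕ) : ℝ≥0∞ :=
  (∑' P, Y.indicator (fun P' => ψ P' * cdfAt P' (φ P') a n) P) / prob ψ Y

/-- Coalition `A'` blocks mechanism `φ` in the interim at prior `ψ`.  Each `R a`
is the set of profiles in which `a`'s preferences are ones at which `a` agrees to
deviate; it is required to depend only on `a`'s own preferences. -/
def BlocksInterim (A' : Set (M ⊕ W)) (φ : Mechanism M W) (ψ : PMF (Profile M W)) : Prop :=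
  A'.Nonempty ∧ ∃ (φ' : Mechanism M W) (R : (M ⊕ W) → Set (Profile M W)),
    (∀ (a : M ⊕ W) (P P' : Profile M W), prefEq P P' a → (P ∈ R a ↔ P' ∈ R a)) ∧
    (∀ a ∈ A', ∀ P : Profile M W, prob (φ' P) {μ | μ.toFun a ∈ A'} = 1) ∧
    (∀ a ∈ A', ∀ Pt : Profile M W,
      Pt ∈ R a ↔ (0 < prob ψ (interimEvent A' R a Pt) ∧
        SD (cdfCond ψ (interimEvent A' R a Pt) φ' a)
           (cdfCond ψ (interimEvent A' R a Pt) φ a))) ∧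
    0 < prob ψ {P | ∀ a ∈ A', P ∈ R a}

def InterimStableAt (φ : Mechanism M W) (ψ : PMF (Profile M W)) : Prop :=
  ∀ A' : Set (M ⊕ W), ¬ BlocksInterim A' φ ψ

def InterimStable (φ : Mechanism M W) : Prop := ∀ ψ, InterimStableAt φ ψ

def InterimPairwiseStable (φ : Mechanism M W) : Prop :=
  ∀ (ψ : PMF (Profile M W)) (A' : Set (M ⊕ W)), IsPairCoalition A' → ¬ BlocksInterim A' φ ψ

/-- `MRanks P m rw ru` : man `m` assigns rank `rw w` to each woman `w` and
rank `ru` to remaining unmatched. -/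
def MRanks (P : Profile M W) (m : M) (rw : W → ℕ) (ru : ℕ) : Prop :=
  (∀ w, mrank P m (some w) = rw w) ∧ mrank P m none = ru

/-- `WRanks P w rm ru` : woman `w` assigns rank `rm m` to each man `m` and
rank `ru` to remaining unmatched. -/
def WRanks (P : Profile M W) (w : W) (rm : M → ℕ) (ru : ℕ) : Prop :=
  (∀ m, wrank P w (some m) = rm m) ∧ wrank P w none = ru

instance (P : Profile M W) (m : M) (rw : W → ℕ) (ru : ℕ) : Decidable (MRanks P m rw ru) :=
  decidable_of_iff ((∀ w, mrank P m (some w) = rw w) ∧ mrank P m none = ru) Iff.rfl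

instance (P : Profile M W) (w : W) (rm : M → ℕ) (ru : ℕ) : Decidable (WRanks P w rm ru) :=
  decidable_of_iff ((∀ m, wrank P w (some m) = rm m) ∧ wrank P w none = ru) Iff.rfl

/-- The perfect matching induced by a bijection `e : M ≃ W`. -/
def matchingOf (e : M ≃ W) : Matching M W where
  toFun a :=
    match a with
    | Sum.inl m => Sum.inr (e m)
    | Sum.inr w => Sum.inl (e.symm w)
  man_range m := Or.inr ⟨e m, rfl⟩
  woman_range w := Or.inr ⟨e.symm w, rfl⟩
  mutual_cond m w := by
    constructor
    · intro h
      simp only [Sum.inr.injEq] at h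
      simp [← h]
    · intro h
      simp only [Sum.inl.injEq] at h
      simp [← h]

/-- `P'` is the permutation of profile `P` obtained by (`σM`, `σW`):
`P_a(a') = P'_{σ(a)}(σ(a'))` for all agents `a` and all `a'` in the domain of `P_a`. -/
def IsPermutedProfile (σM : Equiv.Perm M) (σW : Equiv.Perm W) (P P' : Profile M W) : Prop :=
  (∀ m w, P'.mpref (σM m) (some (σW w)) = P.mpref m (some w)) ∧
  (∀ m, P'.mpref (σM m) none = P.mpref m none) ∧
  (∀ w m, P'.wpref (σW w) (some (σM m)) = P.wpref w (some m)) ∧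
  (∀ w, P'.wpref (σW w) none = P.wpref w none)

/-- Probability (jointly over the profile drawn from `ψ` and the internal
randomization of `φ`) that agent `a` is assigned a partner of rank exactly `k`. -/
noncomputable def probRankEq (ψ : PMF (Profile M W)) (φ : Mechanism M W) (a : M ⊕ W) (k : ℕ) : ℝ≥0∞ :=
  ∑' P, ψ P * prob (φ P) {μ | prank P μ a = k}

/-- CDF of a distribution on ranks `{1,2,3}` with probabilities `q1`, `q2`, `q3`. -/
def cdf3 (q1 q2 q3 : ℝ) (n : ℕ) : ℝ :=
  (if 1 ≤ n then q1 else 0) + (if 2 ≤ n then q2 else 0) + (if 3 ≤ n then q3 else 0)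

/-- Strict first-order stochastic dominance for real-valued rank CDFs. -/
def SDR (F G : ℕ → ℝ) : Prop := (∀ n, G n ≤ F n) ∧ ∃ n, G n < F n

end Unraveling

/-!
A mechanism that no coalition blocks at a degenerate prior matches mutually best attainable pairs.
Assign secret roles `0`, `1`, `2` to the men and to the women, and let role `0` rank the opposite
roles `0, 2, 1` while roles `1` and `2` rank them `0, 1, 2`. Then, role by role, equal roles are
forced to be matched, which gives an agent of role `i` a partner of rank `i + 1`. Now draw the roles
uniformly. From its own preference list an agent learns nothing about its own role, so
the interim rank is uniform on `{1, 2, 3}`. If everybody deviates to the matching of role `i` with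
role `2 - i`, then roles `0`, `1`, `2` get a partner of rank `2`, `2`, `1` instead, and this
dominates for every agent.
-/

namespace Unraveling

section Probability

variable {α : Type*}

theorem prob_eq_toOuterMeasure (p : PMF α) (s : Set α) : prob p s = p.toOuterMeasure s :=
  (p.toOuterMeasure_apply s).symm

theorem prob_pos_iff {p : PMF α} {s : Set α} : 0 < prob p s ↔ (p.support ∩ s).Nonempty := by
  rw [prob_eq_toOuterMeasure, pos_iff_ne_zero, Ne, PMF.toOuterMeasure_apply_eq_zero_iff,
    Set.not_disjoint_iff_nonempty_inter]

theorem prob_eq_one_iff {p : PMF α} {s : Set α} : prob p s = 1 ↔ p.support ⊆ s := by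
  rw [prob_eq_toOuterMeasure, PMF.toOuterMeasure_apply_eq_one_iff]

theorem prob_le_one (p : PMF α) (s : Set α) : prob p s ≤ 1 := by
  rw [← prob_eq_one_iff.2 (Set.subset_univ p.support), prob_eq_toOuterMeasure,
    prob_eq_toOuterMeasure]
  exact MeasureTheory.measure_mono (Set.subset_univ s)

theorem prob_congr_of_inter_support {p : PMF α} {s t : Set α}
    (h : s ∩ p.support = t ∩ p.support) : prob p s = prob p t := by
  simpa only [prob_eq_toOuterMeasure] using p.toOuterMeasure_apply_eq_of_inter_support_eq h

open Classical in
theorem tsum_map_mul {β : Type*} (p : PMF α) (f : α → β) (g : β → ℝ≥0∞) :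
    ∑' y, p.map f y * g y = ∑' x, p x * g (f x) := by
  simp only [PMF.map_apply, ← ENNReal.tsum_mul_right, ite_mul, zero_mul]
  rw [ENNReal.tsum_comm]
  simp only [tsum_ite_eq]

theorem SD.div {F G : ℕ → ℝ≥0∞} (h : SD F G) {c : ℝ≥0∞} (hc : c ≠ 0) (hc' : c ≠ ⊤) :
    SD (fun n ↦ F n / c) (fun n ↦ G n / c) :=
  ⟨fun n ↦ ENNReal.div_le_div_right (h.1 n) c,
    h.2.imp fun _ hn ↦ ENNReal.div_lt_div_right hc hc' hn⟩

end Probability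

section Ranks

variable {M W : Type*}

theorem Matching.toFun_toFun (μ : Matching M W) (a : M ⊕ W) : μ.toFun (μ.toFun a) = a := by
  rcases a with m | w
  · rcases μ.man_range m with h | ⟨w, h⟩
    · rw [h, h]
    · rw [h, (μ.mutual_cond m w).1 h]
  · rcases μ.woman_range w with h | ⟨m, h⟩
    · rw [h, h]
    · rw [h, (μ.mutual_cond m w).2 h]

variable [Fintype M] [Fintype W]

theorem prefEq.refl (P : Profile M W) (a : M ⊕ W) : prefEq P P a := by
  cases a <;> rfl

theorem prefEq.symm {P P' : Profile M W} {a : M ⊕ W} (h : prefEq P P' a) : prefEq P' P a := by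
  cases a <;> exact Eq.symm h

theorem prefEq.trans {P P' P'' : Profile M W} {a : M ⊕ W} (h : prefEq P P' a)
    (h' : prefEq P' P'' a) : prefEq P P'' a := by
  cases a <;> exact Eq.trans h h'

theorem prank_inl_eq_mrank_iff {P : Profile M W} {μ : Matching M W} {m : M} {w : W} :
    prank P μ (Sum.inl m) = mrank P m (some w) ↔ μ.toFun (Sum.inl m) = Sum.inr w := by
  rcases h : μ.toFun (Sum.inl m) with m' | w' <;>
    simp [prank, mrank, Matching.partnerM, h, Fin.val_inj]

theorem prank_inr_eq_wrank_iff {P : Profile M W} {μ : Matching M W} {m : M} {w : W} :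
    prank P μ (Sum.inr w) = wrank P w (some m) ↔ μ.toFun (Sum.inr w) = Sum.inl m := by
  rcases h : μ.toFun (Sum.inr w) with m' | w' <;>
    simp [prank, wrank, Matching.partnerW, h, Fin.val_inj]

theorem cdfAt_pure_eq_one {P : Profile M W} {μ : Matching M W} {a : M ⊕ W} {n : ℕ}
    (h : prank P μ a ≤ n) : cdfAt P (PMF.pure μ) a n = 1 :=
  prob_eq_one_iff.2 (by simpa using h)

theorem cdfAt_lt_one {P : Profile M W} {p : PMF (Matching M W)} {a : M ⊕ W} {n : ℕ}
    {μ : Matching M W} (hμ : μ ∈ p.support) (h : n < prank P μ a) : cdfAt P p a n < 1 :=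
  (prob_le_one _ _).lt_of_ne fun heq ↦ h.not_ge (prob_eq_one_iff.1 heq hμ)

theorem cdfAt_le_cdfAt_pure {P P' : Profile M W} {p : PMF (Matching M W)} {ν : Matching M W}
    {a : M ⊕ W} (h : ∀ μ ∈ p.support, prank P' ν a ≤ prank P μ a) (n : ℕ) :
    cdfAt P p a n ≤ cdfAt P' (PMF.pure ν) a n := by
  by_cases hν : prank P' ν a ≤ n
  · exact (prob_le_one _ _).trans_eq (cdfAt_pure_eq_one hν).symm
  · refine le_of_not_gt fun hlt ↦ ?_
    obtain ⟨μ, hμ, hμn⟩ := prob_pos_iff.1 (pos_of_gt hlt)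
    exact hν ((h μ hμ).trans hμn)

theorem cdfAt_lt_cdfAt_pure {P P' : Profile M W} {p : PMF (Matching M W)}
    {μ ν : Matching M W} {a : M ⊕ W} (hμ : μ ∈ p.support) (h : prank P' ν a < prank P μ a) :
    ∃ n, cdfAt P p a n < cdfAt P' (PMF.pure ν) a n :=
  ⟨prank P' ν a, (cdfAt_lt_one hμ h).trans_eq (cdfAt_pure_eq_one le_rfl).symm⟩

end Ranks

section Blocking

variable {M W : Type*} [Fintype M] [DecidableEq M] [Fintype W] [DecidableEq W]

theorem cdfCond_congr_of_inter_support {ψ : PMF (Profile M W)} {Y Z : Set (Profile M W)}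
    (h : Y ∩ ψ.support = Z ∩ ψ.support) (φ : Mechanism M W) (a : M ⊕ W) :
    cdfCond ψ Y φ a = cdfCond ψ Z φ a := by
  have mem_iff : ∀ P, ψ P ≠ 0 → (P ∈ Y ↔ P ∈ Z) := fun P hP ↦ by
    simpa [hP] using Set.ext_iff.1 h P
  funext n
  rw [cdfCond, cdfCond, prob_congr_of_inter_support h]
  congr 1
  refine tsum_congr fun P ↦ ?_
  by_cases hP : ψ P = 0
  · simp [Set.indicator, hP]
  · by_cases hPZ : P ∈ Z
    · rw [Set.indicator_of_mem hPZ, Set.indicator_of_mem ((mem_iff P hP).2 hPZ)]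
    · rw [Set.indicator_of_notMem hPZ, Set.indicator_of_notMem (hPZ ∘ (mem_iff P hP).1)]

-- The acceptance set of `a` consists of all preferences of positive probability, so that the
-- interim event carries no information beyond `a`'s own preferences.
theorem blocksInterim_of_forall_support {A' : Set (M ⊕ W)} {φ φ' : Mechanism M W}
    {ψ : PMF (Profile M W)} (hA' : A'.Nonempty)
    (hφ' : ∀ a ∈ A', ∀ P, prob (φ' P) {μ | μ.toFun a ∈ A'} = 1)
    (hSD : ∀ a ∈ A', ∀ P ∈ ψ.support,
      SD (cdfCond ψ {P' | prefEq P' P a} φ' a) (cdfCond ψ {P' | prefEq P' P a} φ a)) :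
    BlocksInterim A' φ ψ := by
  let R (a : M ⊕ W) : Set (Profile M W) := {P | ∃ P' ∈ ψ.support, prefEq P P' a}
  have support_subset (a : M ⊕ W) : ψ.support ⊆ R a := fun P hP ↦ ⟨P, hP, .refl P a⟩
  refine ⟨hA', φ', R, fun a P P' h ↦ ?_, hφ', fun a ha P ↦ ⟨?_, ?_⟩, ?_⟩
  · exact ⟨fun ⟨T, hT, hPT⟩ ↦ ⟨T, hT, h.symm.trans hPT⟩,
      fun ⟨T, hT, hPT⟩ ↦ ⟨T, hT, h.trans hPT⟩⟩
  · rintro ⟨T, hT, hPT⟩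
    have event_eq : interimEvent A' R a P ∩ ψ.support = {P' | prefEq P' T a} ∩ ψ.support := by
      ext P'
      exact ⟨fun h ↦ ⟨h.1.1.trans hPT, h.2⟩,
        fun h ↦ ⟨⟨h.1.trans hPT.symm, fun b _ _ ↦ support_subset b h.2⟩, h.2⟩⟩
    rw [prob_congr_of_inter_support event_eq, cdfCond_congr_of_inter_support event_eq,
      cdfCond_congr_of_inter_support event_eq, prob_pos_iff]
    exact ⟨⟨T, hT, .refl T a⟩, hSD a ha T hT⟩
  · rintro ⟨hpos, -⟩
    obtain ⟨T, hT, hTP, -⟩ := prob_pos_iff.1 hpos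
    exact ⟨T, hT, hTP.symm⟩
  · obtain ⟨P, hP⟩ := ψ.support_nonempty
    exact prob_pos_iff.2 ⟨P, hP, fun a _ ↦ support_subset a hP⟩

theorem cdfCond_map {X : Type*} (p : PMF X) (Q : X → Profile M W) (Y : Set (Profile M W))
    (φ : Mechanism M W) (a : M ⊕ W) (n : ℕ) :
    cdfCond (p.map Q) Y φ a n =
      (∑' x, p x * Y.indicator (fun P ↦ cdfAt P (φ P) a n) (Q x)) / prob (p.map Q) Y := by
  rw [cdfCond, ← tsum_map_mul p Q (Y.indicator fun P ↦ cdfAt P (φ P) a n)]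
  congr 1
  refine tsum_congr fun P ↦ ?_
  by_cases hP : P ∈ Y <;> simp [hP]

theorem SD_cdfCond_map_of_coupling {X : Type*} {p : PMF X} {Q : X → Profile M W}
    {Y : Set (Profile M W)} {φ φ' : Mechanism M W} {a : M ⊕ W} (σ : Equiv.Perm X)
    (hp : ∀ x, p (σ x) = p x) (hY : ∀ x, Q (σ x) ∈ Y ↔ Q x ∈ Y)
    (hle : ∀ x n, cdfAt (Q x) (φ (Q x)) a n ≤ cdfAt (Q (σ x)) (φ' (Q (σ x))) a n)
    (hlt : ∃ x ∈ p.support, Q x ∈ Y ∧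
      ∃ n, cdfAt (Q x) (φ (Q x)) a n < cdfAt (Q (σ x)) (φ' (Q (σ x))) a n) :
    SD (cdfCond (p.map Q) Y φ' a) (cdfCond (p.map Q) Y φ a) := by
  let mass (χ : Mechanism M W) (n : ℕ) (x : X) : ℝ≥0∞ :=
    p x * Y.indicator (fun P ↦ cdfAt P (χ P) a n) (Q x)
  have mass_le (n : ℕ) (x : X) : mass φ n x ≤ mass φ' n (σ x) := by
    simp only [mass, hp]
    gcongr
    by_cases hx : Q x ∈ Y
    · simpa [hx, hY] using hle x n
    · simp [hx]
  have tsum_mass_ne_top (n : ℕ) : ∑' x, mass φ n x ≠ ⊤ := by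
    refine ne_top_of_le_ne_top p.tsum_coe_ne_top (ENNReal.tsum_le_tsum fun x ↦ ?_)
    exact mul_le_of_le_one_right' ((Set.indicator_le_self _ _ _).trans (prob_le_one _ _))
  obtain ⟨x, hx, hxY, n, hn⟩ := hlt
  have mass_lt : mass φ n x < mass φ' n (σ x) := by
    simpa [mass, hp, hxY, hY] using ENNReal.mul_lt_mul_right hx (p.apply_ne_top x) hn
  have SD_tsum : SD (fun n ↦ ∑' x, mass φ' n x) (fun n ↦ ∑' x, mass φ n x) := by
    simp only [SD, ← σ.tsum_eq (mass φ' _)]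
    exact ⟨fun n ↦ ENNReal.tsum_le_tsum (mass_le n),
      n, ENNReal.tsum_lt_tsum (tsum_mass_ne_top n) (mass_le n) mass_lt⟩
  have hpos : 0 < prob (p.map Q) Y :=
    prob_pos_iff.2 ⟨Q x, (PMF.mem_support_map_iff Q p _).2 ⟨x, hx, rfl⟩, hxY⟩
  simpa only [mass, ← cdfCond_map] using
    SD_tsum.div hpos.ne' (ne_top_of_le_ne_top ENNReal.one_ne_top (prob_le_one _ _))

theorem blocksInterim_map_of_coupling {X : Type*} {p : PMF X} {Q : X → Profile M W}
    {A' : Set (M ⊕ W)} {φ φ' : Mechanism M W} (hA' : A'.Nonempty)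
    (hφ' : ∀ a ∈ A', ∀ P, prob (φ' P) {μ | μ.toFun a ∈ A'} = 1)
    (σ : M ⊕ W → Equiv.Perm X) (hp : ∀ a ∈ A', ∀ x, p (σ a x) = p x)
    (hQ : ∀ a ∈ A', ∀ x, prefEq (Q (σ a x)) (Q x) a)
    (hle : ∀ a ∈ A', ∀ x n,
      cdfAt (Q x) (φ (Q x)) a n ≤ cdfAt (Q (σ a x)) (φ' (Q (σ a x))) a n)
    (hlt : ∀ a ∈ A', ∀ x ∈ p.support, ∃ y ∈ p.support, prefEq (Q y) (Q x) a ∧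
      ∃ n, cdfAt (Q y) (φ (Q y)) a n < cdfAt (Q (σ a y)) (φ' (Q (σ a y))) a n) :
    BlocksInterim A' φ (p.map Q) := by
  refine blocksInterim_of_forall_support hA' hφ' fun a ha P hP ↦ ?_
  obtain ⟨x, hx, rfl⟩ := (PMF.mem_support_map_iff Q p P).1 hP
  exact SD_cdfCond_map_of_coupling (σ a) (hp a ha)
    (fun y ↦ ⟨(hQ a ha y).symm.trans, (hQ a ha y).trans⟩) (hle a ha) (hlt a ha x hx)

theorem cdfCond_pure {P : Profile M W} {Y : Set (Profile M W)} (hP : P ∈ Y)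
    (φ : Mechanism M W) (a : M ⊕ W) : cdfCond (PMF.pure P) Y φ a = cdfAt P (φ P) a := by
  have prob_eq_one : prob (PMF.pure P) Y = 1 := prob_eq_one_iff.2 (by simpa using hP)
  funext n
  rw [cdfCond, prob_eq_one, div_one, tsum_eq_single P fun P' hP' ↦ by simp [Set.indicator, hP']]
  simp [hP]

theorem BlocksExPost.blocksInterim_pure {A' : Set (M ⊕ W)} {φ : Mechanism M W}
    {P : Profile M W} (h : BlocksExPost A' φ P) : BlocksInterim A' φ (PMF.pure P) := by
  obtain ⟨hA', φ', hφ', hSD⟩ := h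
  refine blocksInterim_of_forall_support (φ' := fun _ ↦ φ' P) hA' (fun a ha _ ↦ hφ' a ha)
    fun a ha P' hP' ↦ ?_
  obtain rfl : P' = P := by simpa using hP'
  have mem_self : P' ∈ {P | prefEq P P' a} := prefEq.refl P' a
  simpa only [cdfCond_pure mem_self] using hSD a ha

theorem InterimStable.exPostStable {φ : Mechanism M W} (hφ : InterimStable φ) :
    ExPostStable φ :=
  fun P A' h ↦ hφ (PMF.pure P) A' h.blocksInterim_pure

theorem ExPostStable.exPostPairwiseStable {φ : Mechanism M W} (hφ : ExPostStable φ) :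
    ExPostPairwiseStable φ :=
  fun P A' _ ↦ hφ P A'

end Blocking

section MutualBest

variable {M W : Type*} [Fintype M] [DecidableEq M] [Fintype W] [DecidableEq W]

/-- The matching in which `m` and `w` are partners and everyone else is unmatched; it is the
outcome of the deviation of the pair `m`, `w`. -/
def pairMatching (m : M) (w : W) : Matching M W where
  toFun := Equiv.swap (Sum.inl m) (Sum.inr w)
  man_range m' := by
    by_cases h : m' = m <;> simp [h, Equiv.swap_apply_def]
  woman_range w' := by
    by_cases h : w' = w <;> simp [h, Equiv.swap_apply_def]
  mutual_cond m' w' := by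
    rw [← Equiv.eq_symm_apply, Equiv.symm_swap, eq_comm]

theorem ExPostPairwiseStable.toFun_eq_of_mutual_best {φ : Mechanism M W}
    (hφ : ExPostPairwiseStable φ) {P : Profile M W} {m : M} {w : W}
    (hm : ∀ μ ∈ (φ P).support, mrank P m (some w) ≤ prank P μ (Sum.inl m))
    (hw : ∀ μ ∈ (φ P).support, wrank P w (some m) ≤ prank P μ (Sum.inr w)) :
    ∀ μ ∈ (φ P).support, μ.toFun (Sum.inl m) = Sum.inr w := by
  intro μ hμ
  by_contra hne
  have hm_pair : prank P (pairMatching m w) (Sum.inl m) = mrank P m (some w) :=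
    prank_inl_eq_mrank_iff.2 (Equiv.swap_apply_left _ _)
  have hw_pair : prank P (pairMatching m w) (Sum.inr w) = wrank P w (some m) :=
    prank_inr_eq_wrank_iff.2 (Equiv.swap_apply_right _ _)
  have hm_lt : mrank P m (some w) < prank P μ (Sum.inl m) :=
    (hm μ hμ).lt_of_ne fun h ↦ hne (prank_inl_eq_mrank_iff.1 h.symm)
  have hw_lt : wrank P w (some m) < prank P μ (Sum.inr w) :=
    (hw μ hμ).lt_of_ne fun h ↦
      hne ((μ.mutual_cond m w).2 (prank_inr_eq_wrank_iff.1 h.symm))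
  refine hφ P {Sum.inl m, Sum.inr w} ⟨?_, ?_⟩
    ⟨⟨Sum.inl m, by simp⟩, fun _ ↦ PMF.pure (pairMatching m w), ?_, ?_⟩
  · simp [Set.Subsingleton]
  · simp [Set.Subsingleton]
  · rintro a (rfl | rfl) <;> simp [prob_eq_one_iff, pairMatching]
  · rintro a (rfl | rfl)
    · rw [← hm_pair] at hm hm_lt
      exact ⟨cdfAt_le_cdfAt_pure hm, cdfAt_lt_cdfAt_pure hμ hm_lt⟩
    · rw [← hw_pair] at hw hw_lt
      exact ⟨cdfAt_le_cdfAt_pure hw, cdfAt_lt_cdfAt_pure hμ hw_lt⟩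

end MutualBest

section Preferences

variable {A : Type*} [Fintype A] {n : ℕ}

/-- The preference that ranks the elements of `A` in the order given by `g`, with remaining
unmatched (`none`) last. -/
def prefOfOrder (g : A ≃ Fin n) : Option A ≃ Fin (Fintype.card A + 1) :=
  (Equiv.optionCongr g).trans <| finSuccEquivLast.symm.trans <|
    finCongr (by rw [Fintype.card_congr g, Fintype.card_fin])

theorem prefOfOrder_some (g : A ≃ Fin n) (a : A) : (prefOfOrder g (some a) : ℕ) = g a := by
  simp [prefOfOrder]

theorem prefOfOrder_none (g : A ≃ Fin n) : (prefOfOrder g none : ℕ) = n := by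
  simp [prefOfOrder, Fintype.card_congr g]

theorem prefOfOrder_injective : Function.Injective (prefOfOrder : (A ≃ Fin n) → _) :=
  fun g g' h ↦ by
    ext a
    rw [← prefOfOrder_some g, h, prefOfOrder_some]

end Preferences

section Roles

/-- `roleOrder i j` is the position (counted from `0`) of role `j` in the preferences of an
agent of role `i`: role `0` ranks the opposite roles `0, 2, 1`, and roles `1` and `2` rank
them `0, 1, 2`. -/
def roleOrder (i : Fin 3) : Equiv.Perm (Fin 3) :=
  if i = 0 then Equiv.swap 1 2 else Equiv.refl _

theorem roleOrder_eq_zero_iff : ∀ {i j}, roleOrder i j = 0 ↔ j = 0 := by decide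

theorem roleOrder_self : ∀ i, roleOrder i i = i := by decide

theorem roleOrder_two : roleOrder 2 = Equiv.refl _ := rfl

theorem le_roleOrder : ∀ {i j}, i ≤ j → i ≤ roleOrder i j := by decide

theorem roleOrder_rev_le : ∀ i, roleOrder (Fin.rev i) i ≤ i := by decide

theorem roleOrder_rev_two_lt : roleOrder (Fin.rev 2) 2 < 2 := by decide

/-- An assignment of the roles `0`, `1`, `2` to the men and to the women. -/
abbrev RoleAssignment (M W : Type*) := (M ≃ Fin 3) × (W ≃ Fin 3)

variable {M W : Type*}

/-- The role of an agent of either side. -/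
def role (x : RoleAssignment M W) : M ⊕ W → Fin 3 :=
  Sum.elim x.1 x.2

variable [Fintype M] [Fintype W]

/-- The profile in which every agent ranks the other side by role, according to `roleOrder`, and
remaining unmatched last. -/
def roleProfile (x : RoleAssignment M W) : Profile M W where
  mpref m := prefOfOrder (x.2.trans (roleOrder (x.1 m)))
  wpref w := prefOfOrder (x.1.trans (roleOrder (x.2 w)))

theorem roleProfile_injective :
    Function.Injective (roleProfile : RoleAssignment M W → Profile M W) := by
  rintro ⟨e, f⟩ ⟨e', f'⟩ h
  have men (m : M) (w : W) : roleOrder (e m) (f w) = roleOrder (e' m) (f' w) :=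
    DFunLike.congr_fun (prefOfOrder_injective (congrFun (congrArg Profile.mpref h) m)) w
  have women (w : W) (m : M) : roleOrder (f w) (e m) = roleOrder (f' w) (e' m) :=
    DFunLike.congr_fun (prefOfOrder_injective (congrFun (congrArg Profile.wpref h) w)) m
  have same_man_zero (m : M) (hm : e m = 0) : e' m = 0 :=
    roleOrder_eq_zero_iff.1 ((women (f.symm 0) m).symm.trans (roleOrder_eq_zero_iff.2 hm))
  have same_woman_zero (w : W) (hw : f w = 0) : f' w = 0 :=
    roleOrder_eq_zero_iff.1 ((men (e.symm 0) w).symm.trans (roleOrder_eq_zero_iff.2 hw))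
  refine Prod.ext (Equiv.ext fun m ↦ (roleOrder 0).injective ?_)
    (Equiv.ext fun w ↦ (roleOrder 0).injective ?_)
  · simpa [same_woman_zero] using women (f.symm 0) m
  · simpa [same_man_zero] using men (e.symm 0) w

theorem mrank_roleProfile (x : RoleAssignment M W) (m : M) (w : W) :
    mrank (roleProfile x) m (some w) = roleOrder (x.1 m) (x.2 w) + 1 := by
  simp [mrank, roleProfile, prefOfOrder_some]

theorem wrank_roleProfile (x : RoleAssignment M W) (m : M) (w : W) :
    wrank (roleProfile x) w (some m) = roleOrder (x.2 w) (x.1 m) + 1 := by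
  simp [wrank, roleProfile, prefOfOrder_some]

theorem prank_roleProfile_of_toFun_eq_self {x : RoleAssignment M W} {μ : Matching M W}
    {a : M ⊕ W} (h : μ.toFun a = a) : prank (roleProfile x) μ a = 4 := by
  rcases a with m | w
  · simp [prank, mrank, Matching.partnerM, h, roleProfile, prefOfOrder_none]
  · simp [prank, wrank, Matching.partnerW, h, roleProfile, prefOfOrder_none]

theorem prank_roleProfile_of_toFun_ne_self {x : RoleAssignment M W} {μ : Matching M W}
    {a : M ⊕ W} (h : μ.toFun a ≠ a) :
    prank (roleProfile x) μ a = roleOrder (role x a) (role x (μ.toFun a)) + 1 := by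
  rcases a with m | w
  · obtain ⟨w, hw⟩ := (μ.man_range m).resolve_left h
    rw [prank_inl_eq_mrank_iff.2 hw, mrank_roleProfile, hw, role, Sum.elim_inl, Sum.elim_inr]
  · obtain ⟨m, hm⟩ := (μ.woman_range w).resolve_left h
    rw [prank_inr_eq_wrank_iff.2 hm, wrank_roleProfile, hm, role, Sum.elim_inl, Sum.elim_inr]

theorem role_lt_prank {x : RoleAssignment M W} {μ : Matching M W} {a : M ⊕ W}
    (h : ∀ b, role x b < role x a → role x (μ.toFun b) = role x b) :
    (role x a : ℕ) < prank (roleProfile x) μ a := by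
  by_cases hself : μ.toFun a = a
  · rw [prank_roleProfile_of_toFun_eq_self hself]
    omega
  · have role_le : role x a ≤ role x (μ.toFun a) := by
      by_contra! hlt
      have := h _ hlt
      rw [μ.toFun_toFun] at this
      exact hlt.ne' this
    rw [prank_roleProfile_of_toFun_ne_self hself, Nat.lt_succ_iff]
    exact le_roleOrder role_le

theorem exists_prefEq_role_eq_two (x : RoleAssignment M W) (a : M ⊕ W) :
    ∃ y, prefEq (roleProfile y) (roleProfile x) a ∧ role y a = 2 := by
  rcases a with m | w
  · exact ⟨(x.1.trans (Equiv.swap (x.1 m) 2), x.2.trans (roleOrder (x.1 m))),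
      by simp [prefEq, roleProfile, roleOrder_two], by simp [role]⟩
  · exact ⟨(x.1.trans (roleOrder (x.2 w)), x.2.trans (Equiv.swap (x.2 w) 2)),
      by simp [prefEq, roleProfile, roleOrder_two], by simp [role]⟩

end Roles

section Deviation

variable {M W : Type*}

/-- The matching of role `i` with role `2 - i`, to which the grand coalition deviates. -/
def reverseMatching (x : RoleAssignment M W) : Matching M W :=
  matchingOf (x.1.trans (Fin.revPerm.trans x.2.symm))

theorem reverseMatching_toFun_ne_self (x : RoleAssignment M W) (a : M ⊕ W) :
    (reverseMatching x).toFun a ≠ a := by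
  cases a <;> simp [reverseMatching, matchingOf]

theorem role_reverseMatching_toFun (x : RoleAssignment M W) (a : M ⊕ W) :
    role x ((reverseMatching x).toFun a) = Fin.rev (role x a) := by
  cases a <;> simp [reverseMatching, matchingOf, role]

/-- The permutation of the opposite roles that keeps the preferences of an agent unchanged while
the agent's own role changes from `i` to `2 - i`. -/
def compensate (i : Fin 3) : Equiv.Perm (Fin 3) :=
  (roleOrder i).trans (roleOrder (Fin.rev i)).symm

/-- The coupling of the two mechanisms from the viewpoint of agent `a`: roles on `a`'s own side are
reversed, and those on the other side are permuted so that `a` cannot tell the difference. -/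
def reverseRoles (a : M ⊕ W) (x : RoleAssignment M W) : RoleAssignment M W :=
  match a with
  | Sum.inl m => (x.1.trans Fin.revPerm, x.2.trans (compensate (x.1 m)))
  | Sum.inr w => (x.1.trans (compensate (x.2 w)), x.2.trans Fin.revPerm)

theorem role_reverseRoles (a : M ⊕ W) (x : RoleAssignment M W) :
    role (reverseRoles a x) a = Fin.rev (role x a) := by
  cases a <;> simp [role, reverseRoles]

theorem reverseRoles_involutive (a : M ⊕ W) :
    Function.Involutive (reverseRoles a : RoleAssignment M W → RoleAssignment M W) := by
  rintro ⟨e, f⟩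
  cases a <;> ext <;> simp [reverseRoles, compensate]

variable [Fintype M] [Fintype W]

theorem prefEq_reverseRoles (a : M ⊕ W) (x : RoleAssignment M W) :
    prefEq (roleProfile (reverseRoles a x)) (roleProfile x) a := by
  cases a <;> simp [prefEq, roleProfile, reverseRoles, compensate, Equiv.trans_assoc]

theorem prank_reverseMatching_reverseRoles (a : M ⊕ W) (x : RoleAssignment M W) :
    prank (roleProfile (reverseRoles a x)) (reverseMatching (reverseRoles a x)) a =
      roleOrder (Fin.rev (role x a)) (role x a) + 1 := by
  rw [prank_roleProfile_of_toFun_ne_self (reverseMatching_toFun_ne_self _ a),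
    role_reverseMatching_toFun, role_reverseRoles, Fin.rev_rev]

end Deviation

section Impossibility

variable {M W : Type*} [Fintype M] [DecidableEq M] [Fintype W] [DecidableEq W]

-- Induction on the role: once all smaller roles are matched among themselves, the man and the
-- woman of role `i` are each other's best attainable partner.
theorem ExPostPairwiseStable.role_toFun_eq {φ : Mechanism M W} (hφ : ExPostPairwiseStable φ)
    (x : RoleAssignment M W) (a : M ⊕ W) :
    ∀ μ ∈ (φ (roleProfile x)).support, role x (μ.toFun a) = role x a := by
  induction hi : role x a using WellFoundedLT.induction generalizing a with
  | ind i ih =>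
    have prank_bound (b : M ⊕ W) (hb : role x b = i) (μ) (hμ : μ ∈ (φ (roleProfile x)).support) :
        (i : ℕ) + 1 ≤ prank (roleProfile x) μ b := by
      subst hb
      exact role_lt_prank fun b' hb' ↦ ih _ hb' b' rfl μ hμ
    have pair_matched : ∀ μ ∈ (φ (roleProfile x)).support,
        μ.toFun (Sum.inl (x.1.symm i)) = Sum.inr (x.2.symm i) := by
      refine hφ.toFun_eq_of_mutual_best ?_ ?_
      · simpa [mrank_roleProfile, roleOrder_self] using prank_bound _ (by simp [role])
      · simpa [wrank_roleProfile, roleOrder_self] using prank_bound _ (by simp [role])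
    intro μ hμ
    have hinl := pair_matched μ hμ
    have hinr := (μ.mutual_cond _ _).1 hinl
    rcases a with m | w
    · obtain rfl : m = x.1.symm i := x.1.eq_symm_apply.2 hi
      simp [hinl, role]
    · obtain rfl : w = x.2.symm i := x.2.eq_symm_apply.2 hi
      simp [hinr, role]

theorem ExPostPairwiseStable.role_lt_prank {φ : Mechanism M W} (hφ : ExPostPairwiseStable φ)
    (x : RoleAssignment M W) (a : M ⊕ W) :
    ∀ μ ∈ (φ (roleProfile x)).support, (role x a : ℕ) < prank (roleProfile x) μ a :=
  fun μ hμ ↦ Unraveling.role_lt_prank fun b _ ↦ hφ.role_toFun_eq x b μ hμ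

variable [Nonempty (RoleAssignment M W)]

/-- The prior under which the roles are drawn uniformly. -/
noncomputable def rolePrior : PMF (Profile M W) :=
  (PMF.uniformOfFintype (RoleAssignment M W)).map roleProfile

/-- The deviating mechanism: it recovers the roles from the reported profile and matches role `i`
with role `2 - i`. Outside the range of `roleProfile` the outcome is arbitrary. -/
noncomputable def reverseMechanism : Mechanism M W :=
  fun P ↦ PMF.pure (reverseMatching (Function.invFun roleProfile P))

theorem reverseMechanism_roleProfile (x : RoleAssignment M W) :
    reverseMechanism (roleProfile x) = PMF.pure (reverseMatching x) := by
  rw [reverseMechanism, Function.leftInverse_invFun roleProfile_injective]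

theorem ExPostPairwiseStable.blocksInterim_univ {φ : Mechanism M W}
    (hφ : ExPostPairwiseStable φ) : BlocksInterim Set.univ φ rolePrior := by
  obtain ⟨e, -⟩ := Classical.arbitrary (RoleAssignment M W)
  refine blocksInterim_map_of_coupling (φ' := reverseMechanism) ⟨Sum.inl (e.symm 0), trivial⟩
    (fun a _ P ↦ prob_eq_one_iff.2 (by simp)) (fun a ↦ (reverseRoles_involutive a).toPerm)
    (fun a _ x ↦ by simp) (fun a _ ↦ prefEq_reverseRoles a) (fun a _ x ↦ ?_) fun a _ x _ ↦ ?_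
  · rw [Function.Involutive.coe_toPerm, reverseMechanism_roleProfile]
    refine cdfAt_le_cdfAt_pure fun μ hμ ↦ ?_
    rw [prank_reverseMatching_reverseRoles]
    exact (Nat.succ_le_succ (roleOrder_rev_le _)).trans (hφ.role_lt_prank x a μ hμ)
  · obtain ⟨y, hyx, hy⟩ := exists_prefEq_role_eq_two x a
    obtain ⟨μ, hμ⟩ := (φ (roleProfile y)).support_nonempty
    refine ⟨y, by simp, hyx, ?_⟩
    rw [Function.Involutive.coe_toPerm, reverseMechanism_roleProfile]
    refine cdfAt_lt_cdfAt_pure hμ ?_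
    have prank_gt := hφ.role_lt_prank y a μ hμ
    rw [hy] at prank_gt
    rw [prank_reverseMatching_reverseRoles, hy]
    exact (Nat.succ_lt_succ roleOrder_rev_two_lt).trans_le prank_gt

end Impossibility

/-- With three men and three women, no mechanism is interim stable:
for every mechanism there is a prior and a coalition blocking it in the interim. -/
theorem no_mechanism_interimStable (M W : Type*)
    [Fintype M] [DecidableEq M] [Fintype W] [DecidableEq W]
    (hM : Fintype.card M = 3) (hW : Fintype.card W = 3)
    (φ : Mechanism M W) :
    ∃ (ψ : PMF (Profile M W)) (A' : Set (M ⊕ W)), BlocksInterim A' φ ψ := by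
  by_contra! hφ
  have stable : InterimStable φ := hφ
  have : Nonempty (RoleAssignment M W) :=
    ⟨Fintype.equivFinOfCardEq hM, Fintype.equivFinOfCardEq hW⟩
  exact stable rolePrior Set.univ stable.exPostStable.exPostPairwiseStable.blocksInterim_univ

end Unraveling
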